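/- Let F be an invertible n×n matrix over ℝ and G an m×n matrix such that S = −G F⁻¹ Gᵀ is invertible. With Â = [[F, Gᵀ],[G, 0]] and M_B = [[F, Gᵀ],[0, S]], the right-preconditioned matrix satisfies (Â M_B⁻¹ − I)² = 0; that is, Â M_B⁻¹ − I is nilpotent of index at most 2, so a Krylov method applied to the preconditioned system terminates in at most two iterations. -/

import Mathlib

open Matrix

/-!
Block elimination factors `[[A, B], [C, D]]` as `L * [[A, B], [0, D - C A⁻¹ B]]` with `L` unit block
lower triangular. Preconditioning on the right by the second factor therefore leaves `L`, and
`L - 1` is strictly block lower triangular, so it squares to zero.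
-/

section BlockElimination

variable {l m n R : Type*} [Fintype m] [Fintype n]

theorem fromBlocks_strict_lower_mul_strict_lower [NonUnitalNonAssocSemiring R]
    (K L : Matrix m n R) :
    fromBlocks (0 : Matrix n n R) 0 K (0 : Matrix m m R) * fromBlocks 0 0 L 0 = 0 := by
  simp [fromBlocks_multiply]

variable [DecidableEq m] [DecidableEq n] [CommRing R]

theorem fromBlocks_eq_unit_lower_mul_schur {A : Matrix n n R} (hA : IsUnit A)
    (B : Matrix n l R) (C : Matrix m n R) (D : Matrix m l R) :
    fromBlocks A B C D =
      fromBlocks (1 : Matrix n n R) 0 (C * A⁻¹) (1 : Matrix m m R) *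
        fromBlocks A B 0 (D - C * A⁻¹ * B) := by
  have hC : C * A⁻¹ * A = C :=
    nonsing_inv_mul_cancel_right A C ((isUnit_iff_isUnit_det A).mp hA)
  simp [fromBlocks_multiply, hC]

theorem fromBlocks_mul_inv_schur_sub_one {A : Matrix n n R} {B : Matrix n m R}
    {C : Matrix m n R} {D : Matrix m m R} (hA : IsUnit A) (hS : IsUnit (D - C * A⁻¹ * B)) :
    fromBlocks A B C D * (fromBlocks A B 0 (D - C * A⁻¹ * B))⁻¹ - 1 =
      fromBlocks 0 0 (C * A⁻¹) 0 := by
  have hM : IsUnit (fromBlocks A B 0 (D - C * A⁻¹ * B)).det :=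
    (isUnit_iff_isUnit_det _).mp (isUnit_fromBlocks_zero₂₁.mpr ⟨hA, hS⟩)
  have hL : fromBlocks (1 : Matrix n n R) 0 (C * A⁻¹) (1 : Matrix m m R) =
      fromBlocks 0 0 (C * A⁻¹) 0 + 1 := by
    rw [← fromBlocks_one, fromBlocks_add]
    simp only [zero_add, add_zero]
  rw [fromBlocks_eq_unit_lower_mul_schur hA, mul_nonsing_inv_cancel_right _ _ hM, hL,
    add_sub_cancel_right]

theorem exact_schur_preconditioned_nilpotent_general {A : Matrix n n R} {B : Matrix n m R}
    {C : Matrix m n R} {D : Matrix m m R} {S : Matrix m m R} (hA : IsUnit A)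
    (hS : S = D - C * A⁻¹ * B) (hSu : IsUnit S) :
    (fromBlocks A B C D * (fromBlocks A B 0 S)⁻¹ - 1) *
      (fromBlocks A B C D * (fromBlocks A B 0 S)⁻¹ - 1) = 0 := by
  subst hS
  rw [fromBlocks_mul_inv_schur_sub_one hA hSu]
  exact fromBlocks_strict_lower_mul_strict_lower _ _

end BlockElimination

/-- With the exact Schur complement S = −G F⁻¹ Gᵀ, the right-preconditioned
saddle-point matrix satisfies (Â M_B⁻¹ − I)² = 0. -/
theorem exact_schur_preconditioned_nilpotent
    (n m : ℕ) (F : Matrix (Fin n) (Fin n) ℝ) (G : Matrix (Fin m) (Fin n) ℝ)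
    (hF : IsUnit F)
    (S : Matrix (Fin m) (Fin m) ℝ) (hS : S = -(G * F⁻¹ * Gᵀ)) (hSu : IsUnit S)
    (Ahat MB : Matrix (Fin n ⊕ Fin m) (Fin n ⊕ Fin m) ℝ)
    (hA : Ahat = Matrix.fromBlocks F Gᵀ G 0)
    (hMB : MB = Matrix.fromBlocks F Gᵀ 0 S) :
    (Ahat * MB⁻¹ - 1) * (Ahat * MB⁻¹ - 1) = 0 := by
  rw [hA, hMB]
  exact exact_schur_preconditioned_nilpotent_general hF (by rw [hS, zero_sub]) hSu
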